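/- Let k be a field of characteristic p > 2 and V = V₀ ⊕ V₁ a finite-dimensional superspace. The symmetrization operator z ↦ Σ_{σ ∈ 𝔖_p} z·σ on V^{⊗p} (signed action) descends to a k-linear map α: 𝐒^p(V) → 𝚪^p(V) from the signed coinvariants to the signed invariants. The kernel of α is exactly the k-span of { v^p : v ∈ V₀ } (the images in 𝐒^p(V) of the tensors v^{⊗p} for even v), and the cokernel of α has k-dimension equal to dim_k V₀. -/

import Mathlib

open Finset

set_option synthInstance.maxHeartbeats 1000000
set_option maxHeartbeats 4000000

namespace Stmt13

variable {k : Type} [Field k]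
variable {V : Type} [AddCommGroup V] [Module k V]

/-- the number of inversions of the permutation `σ` in which both entries involved are
odd, for a tensor whose `i`-th slot has parity `ε i`; the Koszul sign is `(-1)` to this count -/
def signExp {d : ℕ} (σ : Equiv.Perm (Fin d)) (ε : Fin d → Bool) : ℕ :=
  ((univ ×ˢ univ).filter fun q : Fin d × Fin d =>
    q.1 < q.2 ∧ σ q.2 < σ q.1 ∧ ε (σ q.1) = true ∧ ε (σ q.2) = true).card

/-- the projection of `V = V₀ ⊕ V₁` onto its even (`false`) or odd (`true`) summand -/
noncomputable def prV (V₀ V₁ : Submodule k V) (hc : IsCompl V₀ V₁) : Bool → (V →ₗ[k] V)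
  | false => V₀.subtype ∘ₗ Submodule.linearProjOfIsCompl V₀ V₁ hc
  | true => V₁.subtype ∘ₗ Submodule.linearProjOfIsCompl V₁ V₀ hc.symm

/-- the `d`-th tensor power of `V` -/
abbrev TP (k : Type) [Field k] (V : Type) [AddCommGroup V] [Module k V] (d : ℕ) : Type :=
  PiTensorProduct k (fun _ : Fin d => V)

/-- the signed (right) action of `σ ∈ 𝔖_d` on `V^{⊗d}`: on tensors of homogeneous vectors,
the transposition `(i, i+1)` exchanges the `i`-th and `(i+1)`-th factors and multiplies by
`(-1)` if both are odd.  It is defined by decomposing each slot into its even and odd parts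
(the component with slot parities `ε`), permuting the factors, and multiplying by the
Koszul sign `(-1) ^ signExp σ ε`. -/
noncomputable def sAct (V₀ V₁ : Submodule k V) (hc : IsCompl V₀ V₁) {d : ℕ}
    (σ : Equiv.Perm (Fin d)) : TP k V d →ₗ[k] TP k V d :=
  ∑ ε : Fin d → Bool, ((-1 : k) ^ signExp σ ε) •
    ((PiTensorProduct.reindex k (fun _ : Fin d => V) (σ⁻¹ : Equiv.Perm (Fin d))).toLinearMap ∘ₗ
      PiTensorProduct.map (fun i => prV V₀ V₁ hc (ε i)))

/-- the pure tensor power `v^{⊗d}` -/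
noncomputable def tpowV (d : ℕ) (v : V) : TP k V d :=
  PiTensorProduct.tprod k (fun _ : Fin d => v)

/-- the relations defining the coinvariant space `𝐒^d(V)` -/
noncomputable def symRel (V₀ V₁ : Submodule k V) (hc : IsCompl V₀ V₁) (d : ℕ) :
    Submodule k (TP k V d) :=
  Submodule.span k {x | ∃ (z : TP k V d) (σ : Equiv.Perm (Fin d)), x = z - sAct V₀ V₁ hc σ z}

/-- the invariants `𝚪^d(V) = (V^{⊗d})^{𝔖_d}` for the signed action -/
noncomputable def gammaPow (V₀ V₁ : Submodule k V) (hc : IsCompl V₀ V₁) (d : ℕ) :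
    Submodule k (TP k V d) :=
  ⨅ σ : Equiv.Perm (Fin d), LinearMap.ker (sAct V₀ V₁ hc σ - LinearMap.id)

/-!
The signed action permutes, up to sign, the words in a homogeneous basis of `V`. For any
representation that permutes a basis up to scalars, coinvariants and invariants split along the
orbits of basis indices. If the stabilizer of `x` acts on the line of `b x` by a nontrivial
character, the orbit of `x` contributes zero to both sides; otherwise it contributes a line to each,
and the norm map between these lines is multiplication by the order of the stabilizer, up to a
nonzero scalar. Only the orbits where this order vanishes in `k` contribute to kernel and cokernel.

For words of length `p` the stabilizer order is a product of factorials of letter multiplicities, so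
it is divisible by `p` only for constant words. Constant words in an odd letter are excluded, since
exchanging two slots acts on them by `-1 ≠ 1`; the constant words in an even letter remain.
-/

section Monomial

variable {K G X T : Type*} [Field K] [Group G] [MulAction G X] [AddCommGroup T] [Module K T]

/-- `IsMonomial ρ b c`: the representation `ρ` permutes the basis `b` up to scalars, the vector
`b x` being sent by `g` to `c g x • b (g • x)`. -/
def IsMonomial (ρ : Representation K G T) (b : Module.Basis X K T) (c : G → X → Kˣ) : Prop :=
  ∀ g x, ρ g (b x) = (c g x : K) • b (g • x)

/-- The indices `x` obstructing bijectivity of the norm map of a monomial representation: the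
character by which the stabilizer of `x` acts on the line of `b x` is trivial, and the order of
that stabilizer vanishes in `K`. -/
def singularSet (c : G → X → Kˣ) : Set X :=
  {x | (∀ g ∈ MulAction.stabilizer G x, c g x = 1) ∧
    (Nat.card (MulAction.stabilizer G x) : K) = 0}

variable (G X) in
/-- A set of representatives of the `G`-orbits on `X`. -/
noncomputable def orbitReps : Set X :=
  Set.range (Quotient.out : MulAction.orbitRel.Quotient G X → X)

variable (G) in
lemma exists_smul_eq_of_orbitReps (x : X) : ∃ r ∈ orbitReps G X, ∃ g : G, g • r = x := by
  obtain ⟨g, hg⟩ := MulAction.orbitRel_apply.1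
    (Setoid.symm' _ (Quotient.mk_out (s := MulAction.orbitRel G X) x))
  exact ⟨_, Set.mem_range_self _, g, hg⟩

lemma smul_eq_of_mem_orbitReps {g : G} {x : X} (hx : x ∈ orbitReps G X)
    (hgx : g • x ∈ orbitReps G X) : g • x = x := by
  obtain ⟨q, rfl⟩ := hx
  obtain ⟨q', hq'⟩ := hgx
  have hqq' : q' = q := by
    rw [← Quotient.out_eq q', hq', ← Quotient.out_eq q]
    exact Quotient.sound (MulAction.orbitRel_apply.2 ⟨g, by rw [Quotient.out_eq]⟩)
  rw [← hq', hqq']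

section Norm

variable [Fintype G] (ρ : Representation K G T)

lemma coinvariants_ker_le_ker_norm :
    Representation.Coinvariants.ker ρ ≤ LinearMap.ker ρ.norm := by
  rw [Representation.Coinvariants.ker, Submodule.span_le]
  rintro _ ⟨⟨g, z⟩, rfl⟩
  simp

lemma norm_mem_invariants (z : T) : ρ.norm z ∈ ρ.invariants := fun g => ρ.self_norm_apply g z

/-- The norm map `T_G → T^G` from coinvariants to invariants induced by `z ↦ ∑ g, ρ g z`; for the
signed permutation action on `V^{⊗p}` this is `α : 𝐒^p(V) → 𝚪^p(V)`. -/
noncomputable def coinvariantsNorm :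
    (T ⧸ Representation.Coinvariants.ker ρ) →ₗ[K] ρ.invariants :=
  (Representation.Coinvariants.ker ρ).liftQ
    (ρ.norm.codRestrict ρ.invariants (norm_mem_invariants ρ))
    ((coinvariants_ker_le_ker_norm ρ).trans_eq (LinearMap.ker_codRestrict _ _ _).symm)

end Norm

namespace IsMonomial

variable {ρ : Representation K G T} {b : Module.Basis X K T} {c : G → X → Kˣ}

lemma repr_apply_smul (h : IsMonomial ρ b c) (g : G) (x : X) (z : T) :
    b.repr (ρ g z) (g • x) = c g x * b.repr z x := by
  classical
  suffices hext : b.coord (g • x) ∘ₗ ρ g = (c g x : K) • b.coord x from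
    LinearMap.congr_fun hext z
  refine b.ext fun y => ?_
  rw [LinearMap.comp_apply, h g y]
  by_cases hyx : y = x <;> simp [hyx]

lemma mem_ker_of_ne_one (h : IsMonomial ρ b c) {g : G} {x : X} (hgx : g • x = x)
    (hc : c g x ≠ 1) : b x ∈ Representation.Coinvariants.ker ρ := by
  have hmem : ((c g x : K) - 1) • b x ∈ Representation.Coinvariants.ker ρ :=
    Representation.Coinvariants.mem_ker_of_eq g (b x) _ (by rw [h, hgx, sub_smul, one_smul])
  exact (Submodule.smul_mem_iff _ (sub_ne_zero.2 (Units.val_eq_one.not.2 hc))).1 hmem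

lemma repr_eq_zero_of_ne_one (h : IsMonomial ρ b c) {g : G} {x : X} (hgx : g • x = x)
    (hc : c g x ≠ 1) {z : T} (hz : z ∈ ρ.invariants) : b.repr z x = 0 := by
  have hfix := h.repr_apply_smul g x z
  rw [hz g, hgx] at hfix
  by_contra hne
  exact hc (Units.val_eq_one.1 (mul_eq_right₀ hne |>.1 hfix.symm))

lemma ker_sup_span_orbitReps (h : IsMonomial ρ b c) :
    Representation.Coinvariants.ker ρ ⊔ Submodule.span K (b '' orbitReps G X) = ⊤ := by
  rw [eq_top_iff, ← b.span_eq, Submodule.span_le]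
  rintro _ ⟨x, rfl⟩
  obtain ⟨r, hr, g, rfl⟩ := exists_smul_eq_of_orbitReps G x
  have hsum : (c g r : K) • b (g • r) = (ρ g (b r) - b r) + b r := by rw [h, sub_add_cancel]
  rw [SetLike.mem_coe, ← Submodule.smul_mem_iff _ (c g r).ne_zero, hsum]
  exact Submodule.add_mem_sup (Representation.Coinvariants.sub_mem_ker g _)
    (Submodule.subset_span ⟨r, hr, rfl⟩)

lemma invariants_ext (h : IsMonomial ρ b c) {y z : T} (hy : y ∈ ρ.invariants)
    (hz : z ∈ ρ.invariants) (hyz : ∀ r ∈ orbitReps G X, b.repr y r = b.repr z r) : y = z := by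
  refine b.ext_elem fun x => ?_
  obtain ⟨r, hr, g, rfl⟩ := exists_smul_eq_of_orbitReps G x
  rw [← hy g, ← hz g, h.repr_apply_smul, h.repr_apply_smul, hyz r hr]

variable [Fintype G]

lemma repr_norm_of_stabilizer_char_trivial (h : IsMonomial ρ b c) {x : X}
    (hc : ∀ g ∈ MulAction.stabilizer G x, c g x = 1) {z : T}
    (hz : ∀ g : G, g • x ≠ x → b.repr z (g • x) = 0) :
    b.repr (ρ.norm z) x = Nat.card (MulAction.stabilizer G x) * b.repr z x := by
  classical
  have hterm (g : G) : b.repr (ρ g z) x =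
      if g ∈ MulAction.stabilizer G x then b.repr z x else 0 := by
    have hg := h.repr_apply_smul g (g⁻¹ • x) z
    rw [smul_inv_smul] at hg
    rw [hg]
    split_ifs with hgx
    · rw [inv_smul_eq_iff.2 (MulAction.mem_stabilizer_iff.1 hgx).symm, hc g hgx, Units.val_one,
        one_mul]
    · rw [hz g⁻¹ fun hx => hgx (inv_smul_eq_iff.1 hx).symm, mul_zero]
  simp only [Representation.norm, LinearMap.sum_apply, map_sum, Finsupp.finsetSum_apply, hterm,
    ← Finset.sum_filter, Finset.sum_const, nsmul_eq_mul, Nat.card_eq_fintype_card,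
    Fintype.card_subtype]

lemma repr_norm_of_mem_singularSet (h : IsMonomial ρ b c) {x : X} (hx : x ∈ singularSet c)
    (z : T) : b.repr (ρ.norm z) x = 0 := by
  have hcard {w : T} (hw : ∀ g : G, g • x ≠ x → b.repr w (g • x) = 0) :
      b.repr (ρ.norm w) x = 0 := by
    rw [h.repr_norm_of_stabilizer_char_trivial hx.1 hw, hx.2, zero_mul]
  suffices hext : b.coord x ∘ₗ ρ.norm = 0 from LinearMap.congr_fun hext z
  classical
  refine b.ext fun y => ?_
  by_cases hyx : y ∈ MulAction.orbit G x
  · obtain ⟨g, rfl⟩ := hyx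
    have hnorm : (c g x : K) • ρ.norm (b (g • x)) = ρ.norm (b x) := by
      rw [← map_smul, ← h, Representation.norm_self_apply]
    have hzero : b.repr (ρ.norm (b x)) x = 0 :=
      hcard fun g hg => by rw [b.repr_self, Finsupp.single_eq_of_ne hg]
    rw [← hnorm, map_smul, Finsupp.smul_apply, smul_eq_zero] at hzero
    exact hzero.resolve_left (c g x).ne_zero
  · refine hcard fun g _ => ?_
    rw [b.repr_self, Finsupp.single_eq_of_ne]
    rintro rfl
    exact hyx (MulAction.mem_orbit x g)

lemma norm_eq_zero_of_mem_singularSet (h : IsMonomial ρ b c) {x : X} (hx : x ∈ singularSet c) :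
    ρ.norm (b x) = 0 := by
  classical
  refine b.ext_elem fun y => ?_
  rw [map_zero, Finsupp.zero_apply]
  by_cases hyx : y ∈ MulAction.orbit G x
  · obtain ⟨g, rfl⟩ := MulAction.mem_orbit_iff.1 hyx
    rw [← ρ.self_norm_apply g, h.repr_apply_smul, h.repr_norm_of_mem_singularSet hx, mul_zero]
  · simp only [Representation.norm, LinearMap.sum_apply, map_sum, Finsupp.finsetSum_apply]
    refine Finset.sum_eq_zero fun g _ => ?_
    rw [h, map_smul, b.repr_self, Finsupp.smul_apply, Finsupp.single_eq_of_ne, smul_zero]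
    rintro rfl
    exact hyx (MulAction.mem_orbit x g)

lemma ker_norm (h : IsMonomial ρ b c) :
    LinearMap.ker ρ.norm =
      Representation.Coinvariants.ker ρ ⊔ Submodule.span K (b '' singularSet c) := by
  refine le_antisymm (fun z hz => ?_) (sup_le (coinvariants_ker_le_ker_norm ρ) ?_)
  · obtain ⟨u, hu, w, hw, rfl⟩ :=
      Submodule.mem_sup.1 (h.ker_sup_span_orbitReps.ge (Submodule.mem_top (x := z)))
    have hnorm : ρ.norm w = 0 := by
      rwa [LinearMap.mem_ker, map_add, coinvariants_ker_le_ker_norm ρ hu, zero_add] at hz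
    have hsupp (x : X) (hx : b.repr w x ≠ 0) : x ∈ orbitReps G X :=
      b.mem_span_image.1 hw (Finsupp.mem_support_iff.2 hx)
    refine Submodule.add_mem _ (Submodule.mem_sup_left hu) ?_
    rw [← b.linearCombination_repr w, Finsupp.linearCombination_apply]
    refine Submodule.sum_mem _ fun x hx => Submodule.smul_mem _ _ ?_
    rw [Finsupp.mem_support_iff] at hx
    by_cases hc : ∀ g ∈ MulAction.stabilizer G x, c g x = 1
    · have hcoeff := h.repr_norm_of_stabilizer_char_trivial hc (z := w) fun g hgx =>
        not_imp_comm.1 (hsupp _) fun hmem => hgx (smul_eq_of_mem_orbitReps (hsupp x hx) hmem)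
      rw [hnorm, map_zero, Finsupp.zero_apply, zero_eq_mul, or_iff_left hx] at hcoeff
      exact Submodule.mem_sup_right (Submodule.subset_span ⟨x, ⟨hc, hcoeff⟩, rfl⟩)
    · push Not at hc
      obtain ⟨g, hgx, hg⟩ := hc
      exact Submodule.mem_sup_left (h.mem_ker_of_ne_one hgx hg)
  · rw [Submodule.span_le]
    rintro _ ⟨x, hx, rfl⟩
    exact h.norm_eq_zero_of_mem_singularSet hx

lemma mem_range_norm_iff (h : IsMonomial ρ b c) {z : T} :
    z ∈ LinearMap.range ρ.norm ↔
      z ∈ ρ.invariants ∧ ∀ x ∈ singularSet c, b.repr z x = 0 := by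
  classical
  constructor
  · rintro ⟨y, rfl⟩
    exact ⟨norm_mem_invariants ρ y, fun x hx => h.repr_norm_of_mem_singularSet hx y⟩
  rintro ⟨hz, hsing⟩
  let y : T := b.repr.symm <| Finsupp.onFinset (b.repr z).support
    (fun x => if x ∈ orbitReps G X then
      (Nat.card (MulAction.stabilizer G x) : K)⁻¹ * b.repr z x else 0) (by aesop)
  have hy (x : X) : b.repr y x = if x ∈ orbitReps G X then
      (Nat.card (MulAction.stabilizer G x) : K)⁻¹ * b.repr z x else 0 := by simp [y]
  refine ⟨y, h.invariants_ext (norm_mem_invariants ρ y) hz fun r hr => ?_⟩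
  by_cases hc : ∀ g ∈ MulAction.stabilizer G r, c g r = 1
  · rw [h.repr_norm_of_stabilizer_char_trivial hc, hy, if_pos hr]
    · by_cases hcard : (Nat.card (MulAction.stabilizer G r) : K) = 0
      · rw [hsing r ⟨hc, hcard⟩, mul_zero, mul_zero]
      · rw [mul_inv_cancel_left₀ hcard]
    · exact fun g hg => by rw [hy, if_neg fun hgr => hg (smul_eq_of_mem_orbitReps hr hgr)]
  · push Not at hc
    obtain ⟨g, hgr, hg⟩ := hc
    rw [h.repr_eq_zero_of_ne_one hgr hg hz,
      h.repr_eq_zero_of_ne_one hgr hg (norm_mem_invariants ρ y)]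

lemma ker_coinvariantsNorm (h : IsMonomial ρ b c) :
    LinearMap.ker (coinvariantsNorm ρ) = Submodule.span K
      ((Representation.Coinvariants.ker ρ).mkQ '' (b '' singularSet c)) := by
  rw [coinvariantsNorm, Submodule.ker_liftQ, LinearMap.ker_codRestrict, h.ker_norm,
    Submodule.map_sup, Submodule.mkQ_map_self, bot_sup_eq, Submodule.map_span]

lemma mem_range_coinvariantsNorm_iff (h : IsMonomial ρ b c) {z : ρ.invariants} :
    z ∈ LinearMap.range (coinvariantsNorm ρ) ↔ ∀ x ∈ singularSet c, b.repr z x = 0 := by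
  rw [coinvariantsNorm, Submodule.range_liftQ, LinearMap.range_codRestrict, Submodule.mem_comap,
    Submodule.subtype_apply, h.mem_range_norm_iff, and_iff_right z.2]

end IsMonomial

/-- The coefficients of an invariant at the singular indices, as a linear map. It detects the
cokernel of the norm map. -/
noncomputable def singularCoeff (ρ : Representation K G T) (b : Module.Basis X K T)
    (c : G → X → Kˣ) : ρ.invariants →ₗ[K] (singularSet c →₀ K) :=
  Finsupp.lcomapDomain (↑) Subtype.val_injective ∘ₗ b.repr.toLinearMap ∘ₗ ρ.invariants.subtype

namespace IsMonomial

variable {ρ : Representation K G T} {b : Module.Basis X K T} {c : G → X → Kˣ}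

lemma range_coinvariantsNorm [Fintype G] (h : IsMonomial ρ b c) :
    LinearMap.range (coinvariantsNorm ρ) = LinearMap.ker (singularCoeff ρ b c) := by
  ext z
  simp [h.mem_range_coinvariantsNorm_iff, singularCoeff, Finsupp.ext_iff]

lemma singularCoeff_surjective (h : IsMonomial ρ b c)
    (hfix : singularSet c ⊆ MulAction.fixedPoints G X) :
    Function.Surjective (singularCoeff ρ b c) := by
  have hinv (x : singularSet c) : b x ∈ ρ.invariants := fun g => by
    rw [h, x.2.1 g (hfix x.2 g), hfix x.2 g, Units.val_one, one_smul]
  refine LinearMap.surjective_of_comp_eq_id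
    (Finsupp.linearCombination K fun x : singularSet c => (⟨b x, hinv x⟩ : ρ.invariants)) _ ?_
  ext x y
  simp [singularCoeff]

/-- The cokernel of the norm map has the singular indices as a basis, when these are fixed
by `G`. -/
noncomputable def cokernelEquiv [Fintype G] (h : IsMonomial ρ b c)
    (hfix : singularSet c ⊆ MulAction.fixedPoints G X) :
    (ρ.invariants ⧸ LinearMap.range (coinvariantsNorm ρ)) ≃ₗ[K] (singularSet c →₀ K) :=
  (Submodule.quotEquivOfEq _ _ h.range_coinvariantsNorm).trans
    ((singularCoeff ρ b c).quotKerEquivOfSurjective (h.singularCoeff_surjective hfix))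

end IsMonomial

end Monomial

section KoszulSign

variable {d : ℕ} (σ τ : Equiv.Perm (Fin d)) (ε : Fin d → Bool)

/-- The indicator, with values in `ZMod 2`, of the unordered pairs of slots that `σ` inverts and
whose entries are both odd. Working with unordered pairs lets permutations reindex sums of it. -/
def oddInversion : Sym2 (Fin d) → ZMod 2 :=
  Sym2.lift ⟨fun i j => if ¬(i < j ↔ σ i < σ j) ∧ ε (σ i) ∧ ε (σ j) then 1 else 0, fun i j => by
    have hσ : σ i = σ j ↔ i = j := σ.apply_eq_iff_eq
    grind⟩

lemma oddInversion_mk (i j : Fin d) :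
    oddInversion σ ε s(i, j) = if ¬(i < j ↔ σ i < σ j) ∧ ε (σ i) ∧ ε (σ j) then 1 else 0 :=
  rfl

lemma natCast_signExp : (signExp σ ε : ZMod 2) = ∑ s, oddInversion σ ε s := by
  have hdiag (s : Sym2 (Fin d)) (hs : oddInversion σ ε s ≠ 0) : ¬ s.IsDiag := by
    induction s with
    | _ i j =>
      rw [Sym2.mk_isDiag_iff]
      rintro rfl
      simp [oddInversion_mk] at hs
  rw [← Finset.sum_filter_of_ne fun s _ => hdiag s, ← Finset.sym2_univ,
    Finset.sum_sym2_filter_not_isDiag, signExp]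
  simp only [oddInversion_mk, Finset.sum_boole, Finset.filter_filter]
  congr 2
  ext ⟨i, j⟩
  have hσ : σ i = σ j ↔ i = j := σ.apply_eq_iff_eq
  simp only [Finset.mem_filter, Finset.mem_product, Finset.mem_offDiag, Finset.mem_univ]
  grind

lemma oddInversion_mul (s : Sym2 (Fin d)) :
    oddInversion (σ * τ) ε s = oddInversion σ ε (s.map τ) + oddInversion τ (ε ∘ σ) s := by
  have htwo : (1 : ZMod 2) + 1 = 0 := rfl
  induction s with
  | _ i j =>
    simp only [Sym2.map_mk, oddInversion_mk, Equiv.Perm.mul_apply, Function.comp_apply]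
    grind

lemma natCast_signExp_mul :
    (signExp (σ * τ) ε : ZMod 2) = signExp σ ε + signExp τ (ε ∘ σ) := by
  have hreindex : ∑ s : Sym2 (Fin d), oddInversion σ ε (s.map τ) = ∑ s, oddInversion σ ε s :=
    (Finite.injective_iff_bijective.1 (Sym2.map.injective τ.injective)).sum_comp
      (oddInversion σ ε)
  simp only [natCast_signExp, oddInversion_mul, Finset.sum_add_distrib, hreindex]

lemma signExp_one : signExp 1 ε = 0 :=
  Finset.card_eq_zero.2 <| Finset.filter_eq_empty_iff.2 fun _ _ h => lt_asymm h.1 h.2.1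

variable {ε} in
lemma signExp_of_even (hε : ∀ i, ε i = false) : signExp σ ε = 0 := by
  simp [signExp, hε]

variable {ε} in
lemma neg_one_pow_signExp_of_odd (hε : ∀ i, ε i = true) :
    (-1 : ℤˣ) ^ signExp σ ε = Equiv.Perm.sign σ := by
  rw [Equiv.Perm.sign_eq_prod_prod_Ioi, signExp, ← Finset.prod_const, Finset.prod_filter,
    Finset.prod_product]
  refine Finset.prod_congr rfl fun i _ => ?_
  rw [← Finset.filter_lt_eq_Ioi, Finset.prod_filter]
  refine Finset.prod_congr rfl fun j _ => ?_
  have hσ : σ i = σ j ↔ i = j := σ.apply_eq_iff_eq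
  grind

variable (k) in
/-- The Koszul sign of `σ` acting on a tensor with slot parities `ε`. -/
def koszulSign : kˣ := (-1) ^ signExp σ ε

lemma koszulSign_mul :
    koszulSign k (σ * τ) ε = koszulSign k σ ε * koszulSign k τ (ε ∘ σ) := by
  have hparity : signExp (σ * τ) ε ≡ signExp σ ε + signExp τ (ε ∘ σ) [MOD 2] := by
    rw [← ZMod.natCast_eq_natCast_iff, natCast_signExp_mul, Nat.cast_add]
  rw [koszulSign, koszulSign, koszulSign, ← pow_add]
  exact pow_eq_pow_of_modEq hparity neg_one_sq

lemma koszulSign_one : koszulSign k 1 ε = 1 := by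
  rw [koszulSign, signExp_one, pow_zero]

variable {ε} in
lemma koszulSign_of_even (hε : ∀ i, ε i = false) : koszulSign k σ ε = 1 := by
  rw [koszulSign, signExp_of_even σ hε, pow_zero]

variable {ε} in
lemma koszulSign_of_odd (hε : ∀ i, ε i = true) :
    koszulSign k σ ε = Units.map (Int.castRingHom k) (Equiv.Perm.sign σ) := by
  rw [← neg_one_pow_signExp_of_odd σ hε, map_pow, koszulSign]
  congr 1
  ext
  simp

end KoszulSign

section SignedAction

variable {V₀ V₁ : Submodule k V}

variable (V₀ V₁) in
/-- The summand of `V = V₀ ⊕ V₁` of the given parity, in the encoding of `prV`: even is `false`,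
odd is `true`. -/
def homogeneousPart : Bool → Submodule k V
  | false => V₀
  | true => V₁

lemma prV_apply_of_mem (hc : IsCompl V₀ V₁) {a : Bool} {v : V}
    (hv : v ∈ homogeneousPart V₀ V₁ a) (a' : Bool) :
    prV V₀ V₁ hc a' v = if a' = a then v else 0 := by
  cases a <;> cases a'
  · exact congrArg Subtype.val (Submodule.projectionOnto_apply_left hc ⟨v, hv⟩)
  · exact congrArg Subtype.val (Submodule.projectionOnto_apply_right hc.symm ⟨v, hv⟩)
  · exact congrArg Subtype.val (Submodule.projectionOnto_apply_right hc ⟨v, hv⟩)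
  · exact congrArg Subtype.val (Submodule.projectionOnto_apply_left hc.symm ⟨v, hv⟩)

lemma sAct_tprod (hc : IsCompl V₀ V₁) {d : ℕ} (σ : Equiv.Perm (Fin d)) {ε : Fin d → Bool}
    {v : Fin d → V} (hv : ∀ i, v i ∈ homogeneousPart V₀ V₁ (ε i)) :
    sAct V₀ V₁ hc σ (PiTensorProduct.tprod k v) =
      (koszulSign k σ ε : k) • PiTensorProduct.tprod k (v ∘ σ) := by
  have hzero (ε' : Fin d → Bool) (hε' : ε' ≠ ε) :
      PiTensorProduct.tprod k (fun i => prV V₀ V₁ hc (ε' i) (v i)) = 0 := by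
    obtain ⟨i, hi⟩ := Function.ne_iff.1 hε'
    exact (PiTensorProduct.tprod k).map_coord_zero i
      (by rw [prV_apply_of_mem hc (hv i), if_neg hi])
  have hself : (fun i => prV V₀ V₁ hc (ε i) (v i)) = v :=
    funext fun i => by rw [prV_apply_of_mem hc (hv i), if_pos rfl]
  have hreindex : PiTensorProduct.reindex k (fun _ : Fin d => V) σ⁻¹ (PiTensorProduct.tprod k v) =
      PiTensorProduct.tprod k (v ∘ σ) :=
    PiTensorProduct.reindex_tprod (R := k) (s := fun _ : Fin d => V) σ⁻¹ v
  simp only [sAct, LinearMap.sum_apply, LinearMap.smul_apply, LinearMap.comp_apply,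
    PiTensorProduct.map_tprod]
  rw [Finset.sum_eq_single_of_mem ε (Finset.mem_univ ε) fun ε' _ hε' => by
    rw [hzero ε' hε', map_zero, smul_zero], hself, LinearEquiv.coe_coe, hreindex, koszulSign]
  simp

/-- The basis of `V = V₀ ⊕ V₁` formed by bases of the two summands. -/
noncomputable def homogeneousBasis {ι₀ ι₁ : Type*} (hc : IsCompl V₀ V₁)
    (b₀ : Module.Basis ι₀ k V₀) (b₁ : Module.Basis ι₁ k V₁) : Module.Basis (ι₀ ⊕ ι₁) k V :=
  (b₀.prod b₁).map (Submodule.prodEquivOfIsCompl V₀ V₁ hc)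

lemma homogeneousBasis_mem {ι₀ ι₁ : Type*} (hc : IsCompl V₀ V₁)
    (b₀ : Module.Basis ι₀ k V₀) (b₁ : Module.Basis ι₁ k V₁) (i : ι₀ ⊕ ι₁) :
    homogeneousBasis hc b₀ b₁ i ∈ homogeneousPart V₀ V₁ i.isRight := by
  cases i <;> simp [homogeneousBasis, homogeneousPart]

lemma exists_homogeneous_basis (hc : IsCompl V₀ V₁) :
    ∃ (ι : Type) (b : Module.Basis ι k V) (π : ι → Bool),
      ∀ i, b i ∈ homogeneousPart V₀ V₁ (π i) :=
  ⟨_, _, _, homogeneousBasis_mem hc (Module.Basis.ofVectorSpace k V₀)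
    (Module.Basis.ofVectorSpace k V₁)⟩

/-- The basis of `V^{⊗d}` indexed by words in a basis of `V`. -/
noncomputable def wordBasis {ι : Type*} (b : Module.Basis ι k V) (d : ℕ) :
    Module.Basis (Fin d → ι) k (TP k V d) :=
  Basis.piTensorProduct fun _ => b

lemma wordBasis_apply {ι : Type*} (b : Module.Basis ι k V) {d : ℕ} (f : Fin d → ι) :
    wordBasis b d f = PiTensorProduct.tprod k (b ∘ f) :=
  Basis.piTensorProduct_apply _ _

lemma sAct_wordBasis (hc : IsCompl V₀ V₁) {ι : Type*} {b : Module.Basis ι k V} {π : ι → Bool}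
    (hb : ∀ i, b i ∈ homogeneousPart V₀ V₁ (π i)) {d : ℕ} (σ : Equiv.Perm (Fin d))
    (f : Fin d → ι) :
    sAct V₀ V₁ hc σ (wordBasis b d f) =
      (koszulSign k σ (π ∘ f) : k) • wordBasis b d (f ∘ σ) := by
  rw [wordBasis_apply, wordBasis_apply, sAct_tprod hc σ (v := b ∘ f) fun i => hb (f i)]
  rfl

lemma sAct_one (hc : IsCompl V₀ V₁) (d : ℕ) :
    sAct V₀ V₁ hc (1 : Equiv.Perm (Fin d)) = LinearMap.id := by
  obtain ⟨ι, b, π, hb⟩ := exists_homogeneous_basis hc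
  refine (wordBasis b d).ext fun f => ?_
  rw [sAct_wordBasis hc hb, koszulSign_one, Units.val_one, one_smul]
  rfl

lemma sAct_mul (hc : IsCompl V₀ V₁) {d : ℕ} (σ τ : Equiv.Perm (Fin d)) :
    sAct V₀ V₁ hc (σ * τ) = sAct V₀ V₁ hc τ ∘ₗ sAct V₀ V₁ hc σ := by
  obtain ⟨ι, b, π, hb⟩ := exists_homogeneous_basis hc
  refine (wordBasis b d).ext fun f => ?_
  rw [LinearMap.comp_apply, sAct_wordBasis hc hb, sAct_wordBasis hc hb, map_smul,
    sAct_wordBasis hc hb, koszulSign_mul, Units.val_mul, mul_smul]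
  rfl

open scoped DomMulAct

/-- The signed permutation action as a representation. It is a right action, hence a representation
of the opposite group `DomMulAct`, which acts on words by precomposition. -/
noncomputable def signedRep (hc : IsCompl V₀ V₁) (d : ℕ) :
    Representation k (Equiv.Perm (Fin d))ᵈᵐᵃ (TP k V d) where
  toFun g := sAct V₀ V₁ hc (DomMulAct.mk.symm g)
  map_one' := sAct_one hc d
  map_mul' g h := sAct_mul hc (DomMulAct.mk.symm h) (DomMulAct.mk.symm g)

lemma signedRep_apply (hc : IsCompl V₀ V₁) {d : ℕ} (g : (Equiv.Perm (Fin d))ᵈᵐᵃ) :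
    signedRep hc d g = sAct V₀ V₁ hc (DomMulAct.mk.symm g) :=
  rfl

instance (d : ℕ) : Fintype (Equiv.Perm (Fin d))ᵈᵐᵃ :=
  Fintype.ofEquiv _ DomMulAct.mk

lemma symRel_eq_coinvariants_ker (hc : IsCompl V₀ V₁) (d : ℕ) :
    symRel V₀ V₁ hc d = Representation.Coinvariants.ker (signedRep hc d) := by
  refine le_antisymm (Submodule.span_le.2 ?_) (Submodule.span_le.2 ?_)
  · rintro _ ⟨z, σ, rfl⟩
    exact sub_mem_comm_iff.1 (Representation.Coinvariants.sub_mem_ker (ρ := signedRep hc d)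
      (DomMulAct.mk σ) z)
  · rintro _ ⟨⟨g, z⟩, rfl⟩
    exact sub_mem_comm_iff.1 (Submodule.subset_span ⟨z, DomMulAct.mk.symm g, rfl⟩)

lemma gammaPow_eq_invariants (hc : IsCompl V₀ V₁) (d : ℕ) :
    gammaPow V₀ V₁ hc d = (signedRep hc d).invariants := by
  ext z
  simp only [gammaPow, Submodule.mem_iInf, LinearMap.mem_ker, LinearMap.sub_apply,
    LinearMap.id_apply, sub_eq_zero, Representation.mem_invariants, signedRep_apply]
  exact DomMulAct.mk.forall_congr_left

lemma norm_signedRep_apply (hc : IsCompl V₀ V₁) {d : ℕ} (z : TP k V d) :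
    (signedRep hc d).norm z = ∑ σ : Equiv.Perm (Fin d), sAct V₀ V₁ hc σ z := by
  rw [Representation.norm, LinearMap.sum_apply]
  exact DomMulAct.mk.symm.sum_comp fun σ => sAct V₀ V₁ hc σ z

variable (k) in
/-- The scalars by which the signed action permutes the words in letters of parities `π`. -/
def wordSign {ι : Type*} (π : ι → Bool) {d : ℕ} (g : (Equiv.Perm (Fin d))ᵈᵐᵃ) (f : Fin d → ι) :
    kˣ :=
  koszulSign k (DomMulAct.mk.symm g) (π ∘ f)

lemma signedRep_isMonomial (hc : IsCompl V₀ V₁) {ι : Type*} {b : Module.Basis ι k V}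
    {π : ι → Bool} (hb : ∀ i, b i ∈ homogeneousPart V₀ V₁ (π i)) (d : ℕ) :
    IsMonomial (signedRep hc d) (wordBasis b d) (wordSign k π) :=
  fun g f => sAct_wordBasis hc hb (DomMulAct.mk.symm g) f

end SignedAction

section SingularWords

open scoped DomMulAct

lemma stabilizer_const {α ι : Type*} (i : ι) :
    MulAction.stabilizer (Equiv.Perm α)ᵈᵐᵃ (Function.const α i) = ⊤ :=
  (Subgroup.eq_top_iff' _).2 fun _ => rfl

lemma prime_card_dvd_card_stabilizer_iff {α ι : Type*} [Finite α] (hα : (Nat.card α).Prime)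
    (f : α → ι) :
    Nat.card α ∣ Nat.card (MulAction.stabilizer (Equiv.Perm α)ᵈᵐᵃ f) ↔
      ∃ i, f = Function.const α i := by
  classical
  cases nonempty_fintype α
  constructor
  · have hcard : Nat.card (MulAction.stabilizer (Equiv.Perm α)ᵈᵐᵃ f) =
        ∏ i ∈ Finset.univ.image f, (Fintype.card {a // f a = i}).factorial := by
      rw [← DomMulAct.stabilizer_card' f, ← Nat.card_eq_fintype_card]
      exact Nat.card_congr
        (DomMulAct.mk.symm.subtypeEquiv fun _ => DomMulAct.mem_stabilizer_iff)
    rw [hcard, hα.prime.dvd_finsetProd_iff]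
    rintro ⟨i, -, hi⟩
    refine ⟨i, funext fun a => ?_⟩
    by_contra ha
    rw [hα.dvd_factorial, Nat.card_eq_fintype_card] at hi
    exact (Fintype.card_subtype_lt (p := fun a => f a = i) ha).not_ge hi
  · rintro ⟨i, rfl⟩
    rw [stabilizer_const, Subgroup.card_top, ← Nat.card_congr DomMulAct.mk, Nat.card_perm]
    exact Nat.dvd_factorial hα.pos le_rfl

lemma singularSet_wordSign {p : ℕ} [CharP k p] (hp : p.Prime) (hp2 : 2 < p) {ι : Type*}
    (π : ι → Bool) :
    singularSet (wordSign k π (d := p)) = Function.const (Fin p) '' {i | π i = false} := by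
  have hconst (f : Fin p → ι) :
      (Nat.card (MulAction.stabilizer (Equiv.Perm (Fin p))ᵈᵐᵃ f) : k) = 0 ↔
        ∃ i, f = Function.const (Fin p) i := by
    rw [← prime_card_dvd_card_stabilizer_iff (by rwa [Nat.card_fin]), Nat.card_fin,
      CharP.cast_eq_zero_iff k p]
  ext f
  constructor
  · rintro ⟨hchar, hcard⟩
    obtain ⟨i, rfl⟩ := (hconst f).1 hcard
    refine ⟨i, Bool.eq_false_iff.2 fun hi => ?_, rfl⟩
    have hswap := hchar (DomMulAct.mk (Equiv.swap ⟨0, hp.pos⟩ ⟨1, hp.one_lt⟩)) rfl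
    rw [wordSign, koszulSign_of_odd (ε := π ∘ Function.const (Fin p) i) _ fun _ => hi,
      Equiv.symm_apply_apply, Equiv.Perm.sign_swap (by simp)] at hswap
    have : Fact (2 < p) := ⟨hp2⟩
    exact CharP.neg_one_ne_one k p (by simpa using congrArg Units.val hswap)
  · rintro ⟨i, hi, rfl⟩
    exact ⟨fun g _ => koszulSign_of_even _ fun _ => hi, (hconst _).2 ⟨i, rfl⟩⟩

lemma singularSet_wordSign_subset_fixedPoints {p : ℕ} [CharP k p] (hp : p.Prime) (hp2 : 2 < p)
    {ι : Type*} (π : ι → Bool) :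
    singularSet (wordSign k π) ⊆ MulAction.fixedPoints (Equiv.Perm (Fin p))ᵈᵐᵃ (Fin p → ι) := by
  rw [singularSet_wordSign hp hp2]
  rintro _ ⟨i, -, rfl⟩
  exact fun _ => rfl

lemma mk_singularSet_wordSign {p : ℕ} [CharP k p] (hp : p.Prime) (hp2 : 2 < p) {ι : Type*}
    (π : ι → Bool) :
    Cardinal.mk (singularSet (wordSign k π (d := p))) = Cardinal.mk {i | π i = false} := by
  have : NeZero p := ⟨hp.ne_zero⟩
  rw [singularSet_wordSign hp hp2, Cardinal.mk_image_eq Function.const_injective]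

end SingularWords

section SignedSymmetrization

variable {V₀ V₁ : Submodule k V}

lemma norm_tpowV_eq_zero {p : ℕ} [CharP k p] (hp : p.Prime) (hc : IsCompl V₀ V₁) {v : V}
    (hv : v ∈ V₀) : (signedRep hc p).norm (tpowV p v) = 0 := by
  have hfix (σ : Equiv.Perm (Fin p)) : sAct V₀ V₁ hc σ (tpowV p v) = tpowV p v := by
    rw [tpowV, sAct_tprod hc σ (ε := fun _ => false) fun _ => hv,
      koszulSign_of_even σ fun _ => rfl, Units.val_one, one_smul]
    rfl
  rw [norm_signedRep_apply, Finset.sum_congr rfl fun σ _ => hfix σ, Finset.sum_const,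
    Finset.card_univ, Fintype.card_perm, Fintype.card_fin, ← Nat.cast_smul_eq_nsmul k,
    (CharP.cast_eq_zero_iff k p _).2 (Nat.dvd_factorial hp.pos le_rfl), zero_smul]

lemma ker_coinvariantsNorm_signedRep {p : ℕ} [CharP k p] (hp : p.Prime) (hp2 : 2 < p)
    (hc : IsCompl V₀ V₁) :
    LinearMap.ker (coinvariantsNorm (signedRep hc p)) =
      Submodule.span k {x | ∃ v ∈ V₀, x = Submodule.Quotient.mk (tpowV p v)} := by
  refine le_antisymm ?_ (Submodule.span_le.2 ?_)
  · obtain ⟨ι, b, π, hb⟩ := exists_homogeneous_basis hc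
    rw [(signedRep_isMonomial hc hb p).ker_coinvariantsNorm, singularSet_wordSign hp hp2 π]
    refine Submodule.span_mono ?_
    rintro _ ⟨_, ⟨_, ⟨i, hi, rfl⟩, rfl⟩, rfl⟩
    have hbi := hb i
    rw [hi] at hbi
    exact ⟨b i, hbi, congrArg _ (wordBasis_apply b _)⟩
  · rintro _ ⟨v, hv, rfl⟩
    exact Subtype.ext (norm_tpowV_eq_zero hp hc hv)

lemma setOf_isRight_eq_false {α β : Type*} :
    {x : α ⊕ β | x.isRight = false} = Set.range Sum.inl := by
  ext (x | x) <;> simp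

lemma rank_coker_coinvariantsNorm_signedRep {p : ℕ} [CharP k p] (hp : p.Prime) (hp2 : 2 < p)
    (hc : IsCompl V₀ V₁) :
    Module.rank k ((signedRep hc p).invariants ⧸
      LinearMap.range (coinvariantsNorm (signedRep hc p))) = Module.rank k V₀ := by
  let b₀ := Module.Basis.ofVectorSpace k V₀
  let b₁ := Module.Basis.ofVectorSpace k V₁
  have hmono := signedRep_isMonomial hc (homogeneousBasis_mem hc b₀ b₁) p
  rw [(hmono.cokernelEquiv (singularSet_wordSign_subset_fixedPoints hp hp2 _)).rank_eq,
    rank_finsupp_self', mk_singularSet_wordSign hp hp2,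
    setOf_isRight_eq_false, Cardinal.mk_range_eq _ Sum.inl_injective, b₀.mk_eq_rank'']

end SignedSymmetrization

theorem statement13_general (k : Type) [Field k] (p : ℕ) [CharP k p] (hp : p.Prime) (hp2 : 2 < p)
    (V : Type) [AddCommGroup V] [Module k V] (V₀ V₁ : Submodule k V) (hc : IsCompl V₀ V₁) :
    ∃ α : (TP k V p ⧸ symRel V₀ V₁ hc p) →ₗ[k] ↥(gammaPow V₀ V₁ hc p),
      (∀ z : TP k V p,
        ((α (Submodule.Quotient.mk z) : ↥(gammaPow V₀ V₁ hc p)) : TP k V p) =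
          ∑ σ : Equiv.Perm (Fin p), sAct V₀ V₁ hc σ z) ∧
      LinearMap.ker α =
        Submodule.span k {x | ∃ v ∈ V₀, x = Submodule.Quotient.mk (tpowV p v)} ∧
      Module.rank k (↥(gammaPow V₀ V₁ hc p) ⧸ LinearMap.range α) = Module.rank k ↥V₀ := by
  rw [symRel_eq_coinvariants_ker, gammaPow_eq_invariants]
  exact ⟨coinvariantsNorm (signedRep hc p), norm_signedRep_apply hc,
    ker_coinvariantsNorm_signedRep hp hp2 hc, rank_coker_coinvariantsNorm_signedRep hp hp2 hc⟩

/-- Let `k` be a field of characteristic `p > 2` and `V = V₀ ⊕ V₁` a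
finite-dimensional superspace.  The symmetrization operator `z ↦ ∑_{σ ∈ 𝔖_p} z·σ` descends
to a `k`-linear map `α : 𝐒^p(V) → 𝚪^p(V)` from the signed coinvariants to the signed
invariants; its kernel is exactly the span of `{v^p : v ∈ V₀}`, and its cokernel has
dimension `dim_k V₀`. -/
theorem statement13 (k : Type) [Field k] (p : ℕ) [CharP k p] (hp : p.Prime) (hp2 : 2 < p)
    (V : Type) [AddCommGroup V] [Module k V] [FiniteDimensional k V]
    (V₀ V₁ : Submodule k V) (hc : IsCompl V₀ V₁) :
    ∃ α : (TP k V p ⧸ symRel V₀ V₁ hc p) →ₗ[k] ↥(gammaPow V₀ V₁ hc p),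
      (∀ z : TP k V p,
        ((α (Submodule.Quotient.mk z) : ↥(gammaPow V₀ V₁ hc p)) : TP k V p) =
          ∑ σ : Equiv.Perm (Fin p), sAct V₀ V₁ hc σ z) ∧
      LinearMap.ker α =
        Submodule.span k {x | ∃ v ∈ V₀, x = Submodule.Quotient.mk (tpowV p v)} ∧
      Module.finrank k (↥(gammaPow V₀ V₁ hc p) ⧸ LinearMap.range α) =
        Module.finrank k ↥V₀ := by
  obtain ⟨α, hα, hker, hrank⟩ := statement13_general k p hp hp2 V V₀ V₁ hc
  exact ⟨α, hα, hker, congrArg Cardinal.toNat hrank⟩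

end Stmt13
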